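/- Bound states of the Whittaker (radial Coulomb) operator: let n ∈ ℕ₀, let m ∈ ℂ with Re(m) > −1 and m ≠ −(n + 1/2), let k ∈ ℂ with Re(k) > 0, and set β := 2k(n + m + 1/2). Then the function u(r) := 𝓘_{n+m+1/2, m}(2kr) on ]0,∞[ satisfies: (i) −u''(r) + (m² − 1/4)·r^{−2}·u(r) − (β/r)·u(r) = −k²·u(r) for all r > 0; (ii) ∫_0^∞ |u(r)|² dr < ∞. Hence −β²/(4(n+m+1/2)²) = −k² belongs to the point spectrum of the Whittaker operator H_{β,m} = −∂_r² + (m² − 1/4)/r² − β/r. -/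

import Mathlib

open Complex Set MeasureTheory

/-- Olver-normalized confluent hypergeometric function
`₁𝐅₁(a; c; w) = ∑ (a)ₙ wⁿ/(n! Γ(c+n))`. -/
noncomputable def oneF1reg (a c w : ℂ) : ℂ :=
  ∑' n : ℕ, (ascPochhammer ℂ n).eval a * w ^ n / ((n.factorial : ℂ) * Complex.Gamma (c + n))

/-- 1d Whittaker function `𝓘_{β,m}(z) = z^{1/2+m} e^{-z/2} ₁𝐅₁(1/2+m-β; 1+2m; z)`
(principal branch powers). -/
noncomputable def whittI (β m z : ℂ) : ℂ :=
  z ^ ((1 : ℂ) / 2 + m) * Complex.exp (-z / 2) * oneF1reg (1 / 2 + m - β) (1 + 2 * m) z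

/-!
Write `θ = w d/dw` and `F(a, c) = oneF1reg a c`. On the power series one reads off
`(θ + a) F(a, c) = a F(a + 1, c)`, `(θ + c) F(a, c + 1) = F(a, c)` and
`F(a, c)' = a F(a + 1, c + 1)`. Applying the second relation to the derivative given by the third
and then the first yields Kummer's equation `w F'' + c F' = a F + w F'`, which conjugation by
`z ^ (1/2 + m) * e ^ (-z/2)` turns into Whittaker's equation, for all parameters. At
`β = n + m + 1/2` the series has `a = -n` and terminates, so `u` is a finite combination of the
functions `r ^ (1/2 + m + j) * e ^ (-k r)`, which are square integrable: at `0` because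
`Re m > -1`, at infinity because `Re k > 0`.
-/

open Filter Topology

lemma mul_ascPochhammer_eval_add_one {R : Type*} [CommSemiring R] (a : R) (j : ℕ) :
    a * (ascPochhammer R j).eval (a + 1) = (a + j) * (ascPochhammer R j).eval a := by
  rw [mul_comm (a + j), ← ascPochhammer_succ_eval, ascPochhammer_succ_left]
  simp

/-- The Taylor coefficient `(a)ⱼ / (j! Γ(c+j))` of the Olver-normalized confluent hypergeometric
function; it vanishes when `c + j` is a pole of `Γ`, since there `Complex.Gamma` is `0`. -/
noncomputable def oneF1regCoeff (a c : ℂ) (j : ℕ) : ℂ :=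
  (ascPochhammer ℂ j).eval a / ((j.factorial : ℂ) * Complex.Gamma (c + j))

section OneF1reg

variable (a c w : ℂ) (j : ℕ)

lemma oneF1reg_eq_tsum : oneF1reg a c w = ∑' j, oneF1regCoeff a c j * w ^ j :=
  tsum_congr fun _ => mul_div_right_comm _ _ _

lemma succ_mul_oneF1regCoeff_succ :
    ((j : ℂ) + 1) * oneF1regCoeff a c (j + 1) = a * oneF1regCoeff (a + 1) (c + 1) j := by
  have hj : (j : ℂ) + 1 ≠ 0 := by exact_mod_cast j.succ_ne_zero
  rw [oneF1regCoeff, oneF1regCoeff, ← mul_div_assoc a, mul_ascPochhammer_eval_add_one,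
    ascPochhammer_succ_eval, Nat.factorial_succ]
  push_cast
  rw [add_right_comm c 1, ← add_assoc c, mul_assoc, ← mul_div_assoc,
    mul_div_mul_left _ _ hj, mul_comm (a + j)]

lemma add_mul_oneF1regCoeff_add_one_right :
    (c + j) * oneF1regCoeff a (c + 1) j = oneF1regCoeff a c j := by
  have hΓ := Complex.one_div_Gamma_eq_self_mul_one_div_Gamma_add_one (c + j)
  simp only [oneF1regCoeff, div_eq_mul_inv, mul_inv] at hΓ ⊢
  rw [hΓ, add_right_comm c 1]
  ring

lemma mul_oneF1regCoeff_add_one_left :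
    a * oneF1regCoeff (a + 1) c j = (a + j) * oneF1regCoeff a c j := by
  simp only [oneF1regCoeff, ← mul_div_assoc, mul_ascPochhammer_eval_add_one]

lemma oneF1regCoeff_recurrence :
    (c + j) * (((j : ℂ) + 1) * oneF1regCoeff a c (j + 1)) = (a + j) * oneF1regCoeff a c j := by
  rw [succ_mul_oneF1regCoeff_succ, mul_left_comm, add_mul_oneF1regCoeff_add_one_right,
    mul_oneF1regCoeff_add_one_left]

lemma oneF1regCoeff_neg_natCast_of_lt {n : ℕ} (h : n < j) :
    oneF1regCoeff (-(n : ℂ)) c j = 0 := by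
  rw [oneF1regCoeff, ascPochhammer_eval_neg_coe_nat_of_lt h, zero_div]

lemma oneF1reg_neg_natCast (n : ℕ) :
    oneF1reg (-(n : ℂ)) c w =
      ∑ j ∈ Finset.range (n + 1), oneF1regCoeff (-(n : ℂ)) c j * w ^ j := by
  rw [oneF1reg_eq_tsum]
  refine tsum_eq_sum fun j hj => ?_
  rw [oneF1regCoeff_neg_natCast_of_lt c j (by simpa using hj), zero_mul]

lemma tendsto_oneF1reg_ratio :
    Tendsto (fun j : ℕ => (a + j) / (c + j) * (w / ((j : ℂ) + 1))) atTop (𝓝 0) := by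
  have hfrac : Tendsto (fun j : ℕ => (a + j) / (c + j)) atTop (𝓝 1) := by
    simpa using tendsto_add_mul_div_add_mul_atTop_nhds a c 1 one_ne_zero
  have hinv : Tendsto (fun j : ℕ => w / ((j : ℂ) + 1)) atTop (𝓝 0) := by
    simpa [div_eq_mul_inv] using
      (tendsto_one_div_add_atTop_nhds_zero_nat (𝕜 := ℂ)).const_mul w
  simpa using hfrac.mul hinv

lemma summable_oneF1reg : Summable fun j => oneF1regCoeff a c j * w ^ j := by
  refine summable_of_ratio_norm_eventually_le one_half_lt_one ?_
  filter_upwards [(tendsto_oneF1reg_ratio a c w).norm.eventually_le_const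
      (show ‖(0 : ℂ)‖ < 1 / 2 by simp),
    tendsto_natCast_atTop_atTop.eventually_gt_atTop ‖c‖] with j hratio hj
  have hc : c + j ≠ 0 := fun h => by
    simp [eq_neg_of_add_eq_zero_left h] at hj
  have hsucc : oneF1regCoeff a c (j + 1) * w ^ (j + 1) =
      (a + j) / (c + j) * (w / ((j : ℂ) + 1)) * (oneF1regCoeff a c j * w ^ j) := by
    have hj' : (j : ℂ) + 1 ≠ 0 := by exact_mod_cast j.succ_ne_zero
    field_simp
    linear_combination w * w ^ j * oneF1regCoeff_recurrence a c j
  rw [hsucc, norm_mul]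
  gcongr

lemma norm_oneF1reg_term_le {R : ℝ} (hw : w ∈ Metric.ball 0 R) :
    ‖oneF1regCoeff a c j * w ^ j‖ ≤ ‖oneF1regCoeff a c j * (R : ℂ) ^ j‖ := by
  have hwR : ‖w‖ ≤ ‖(R : ℂ)‖ := by
    rw [norm_real]
    exact (mem_ball_zero_iff.1 hw).le.trans (Real.le_norm_self R)
  simp only [norm_mul, norm_pow]
  gcongr

lemma differentiable_oneF1reg : Differentiable ℂ (oneF1reg a c) := fun w => by
  have hball : w ∈ Metric.ball 0 (‖w‖ + 1) := by simp
  rw [funext (oneF1reg_eq_tsum a c)]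
  exact (differentiableOn_tsum_of_summable_norm (summable_oneF1reg a c (‖w‖ + 1 : ℝ)).norm
    (fun j => by fun_prop) Metric.isOpen_ball
    fun j z hz => norm_oneF1reg_term_le a c z j hz).differentiableAt
      (Metric.isOpen_ball.mem_nhds hball)

lemma hasSum_deriv_oneF1reg :
    HasSum (fun j : ℕ => oneF1regCoeff a c j * (j * w ^ (j - 1))) (deriv (oneF1reg a c) w) := by
  have hball : w ∈ Metric.ball 0 (‖w‖ + 1) := by simp
  have hsum := hasSum_deriv_of_summable_norm (summable_oneF1reg a c (‖w‖ + 1 : ℝ)).norm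
    (fun j => by fun_prop) Metric.isOpen_ball
    (fun j z hz => norm_oneF1reg_term_le a c z j hz) hball
  rw [funext (oneF1reg_eq_tsum a c)]
  simpa only [deriv_const_mul_field, deriv_pow_field] using hsum

lemma deriv_oneF1reg : deriv (oneF1reg a c) w = a * oneF1reg (a + 1) (c + 1) w := by
  have hshift := (hasSum_nat_add_iff' 1).2 (hasSum_deriv_oneF1reg a c w)
  rw [Finset.sum_range_one, Nat.cast_zero, zero_mul, mul_zero, sub_zero] at hshift
  rw [← hshift.tsum_eq, oneF1reg_eq_tsum, ← tsum_mul_left]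
  refine tsum_congr fun j => ?_
  rw [Nat.add_sub_cancel, ← mul_assoc a, ← succ_mul_oneF1regCoeff_succ]
  push_cast
  ring

lemma hasSum_natCast_mul_oneF1reg :
    HasSum (fun j : ℕ => j * (oneF1regCoeff a c j * w ^ j)) (w * deriv (oneF1reg a c) w) := by
  refine ((hasSum_deriv_oneF1reg a c w).mul_left w).congr_fun fun j => ?_
  cases j with
  | zero => simp
  | succ j => rw [Nat.add_sub_cancel, pow_succ]; ring

lemma hasSum_add_natCast_mul_oneF1reg (b : ℂ) :
    HasSum (fun j : ℕ => (b + j) * (oneF1regCoeff a c j * w ^ j))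
      (b * oneF1reg a c w + w * deriv (oneF1reg a c) w) := by
  have hF := (summable_oneF1reg a c w).hasSum
  rw [← oneF1reg_eq_tsum] at hF
  simpa only [add_mul] using (hF.mul_left b).add (hasSum_natCast_mul_oneF1reg a c w)

lemma mul_oneF1reg_add_one_left :
    a * oneF1reg (a + 1) c w = a * oneF1reg a c w + w * deriv (oneF1reg a c) w := by
  rw [← (hasSum_add_natCast_mul_oneF1reg a c w a).tsum_eq, oneF1reg_eq_tsum, ← tsum_mul_left]
  refine tsum_congr fun j => ?_
  rw [← mul_assoc, ← mul_assoc, mul_oneF1regCoeff_add_one_left]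

lemma oneF1reg_eq_mul_add_one_right_add :
    oneF1reg a c w = c * oneF1reg a (c + 1) w + w * deriv (oneF1reg a (c + 1)) w := by
  rw [← (hasSum_add_natCast_mul_oneF1reg a (c + 1) w c).tsum_eq, oneF1reg_eq_tsum]
  refine tsum_congr fun j => ?_
  rw [← mul_assoc, add_mul_oneF1regCoeff_add_one_right]

theorem oneF1reg_kummer_equation :
    w * deriv (deriv (oneF1reg a c)) w + (c - w) * deriv (oneF1reg a c) w =
      a * oneF1reg a c w := by
  have hderiv2 : deriv (deriv (oneF1reg a c)) w = a * deriv (oneF1reg (a + 1) (c + 1)) w := by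
    rw [funext (deriv_oneF1reg a c), deriv_const_mul_field]
  calc w * deriv (deriv (oneF1reg a c)) w + (c - w) * deriv (oneF1reg a c) w
      = a * (c * oneF1reg (a + 1) (c + 1) w + w * deriv (oneF1reg (a + 1) (c + 1)) w)
          - w * deriv (oneF1reg a c) w := by
        rw [hderiv2, deriv_oneF1reg a c w]; ring
    _ = a * oneF1reg (a + 1) c w - w * deriv (oneF1reg a c) w := by
        rw [← oneF1reg_eq_mul_add_one_right_add]
    _ = a * oneF1reg a c w := by rw [mul_oneF1reg_add_one_left]; ring

end OneF1reg

lemma hasDerivAt_cpow_mul_exp_mul {f : ℂ → ℂ} {f' z : ℂ} (s : ℂ) (hz : z ∈ slitPlane)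
    (hf : HasDerivAt f f' z) :
    HasDerivAt (fun z => z ^ s * exp (-z / 2) * f z)
      (z ^ s * exp (-z / 2) * ((s / z - 1 / 2) * f z + f')) z := by
  have hpow : HasDerivAt (fun z : ℂ => z ^ s) (z ^ s * (s / z)) z := by
    refine ((hasDerivAt_id z).cpow_const hz).congr_deriv ?_
    rw [id, cpow_sub _ _ (slitPlane_ne_zero hz), cpow_one]
    ring
  have hexp : HasDerivAt (fun z : ℂ => exp (-z / 2)) (exp (-z / 2) * (-1 / 2)) z :=
    ((hasDerivAt_id z).neg.div_const 2).cexp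
  exact ((hpow.mul hexp).mul hf).congr_deriv (by simp only [Pi.mul_apply]; ring)

lemma hasDerivAt_deriv_cpow_mul_exp_mul {f : ℂ → ℂ} {z : ℂ} (s : ℂ) (hz : z ∈ slitPlane)
    (hf : DifferentiableOn ℂ f slitPlane) :
    HasDerivAt (deriv fun z => z ^ s * exp (-z / 2) * f z)
      (z ^ s * exp (-z / 2) * ((s / z - 1 / 2) ^ 2 * f z - s / z ^ 2 * f z
        + 2 * (s / z - 1 / 2) * deriv f z + deriv (deriv f) z)) z := by
  have hfirst : deriv (fun z => z ^ s * exp (-z / 2) * f z) =ᶠ[𝓝 z]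
      fun z => z ^ s * exp (-z / 2) * ((s / z - 1 / 2) * f z + deriv f z) := by
    filter_upwards [isOpen_slitPlane.mem_nhds hz] with x hx
    exact (hasDerivAt_cpow_mul_exp_mul s hx
      (hf.differentiableAt (isOpen_slitPlane.mem_nhds hx)).hasDerivAt).deriv
  have hfactor : HasDerivAt (fun z => s / z - 1 / 2) (-s / z ^ 2) z := by
    simpa [div_eq_mul_inv] using
      ((hasDerivAt_inv (slitPlane_ne_zero hz)).const_mul s).sub_const (1 / 2)
  have hinner := (hfactor.mul (hf.differentiableAt (isOpen_slitPlane.mem_nhds hz)).hasDerivAt).add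
    ((hf.deriv isOpen_slitPlane).differentiableAt (isOpen_slitPlane.mem_nhds hz)).hasDerivAt
  refine ((hasDerivAt_cpow_mul_exp_mul s hz hinner).congr_of_eventuallyEq hfirst).congr_deriv ?_
  simp only [Pi.add_apply, Pi.mul_apply]
  ring

lemma differentiableOn_whittI (β m : ℂ) : DifferentiableOn ℂ (whittI β m) slitPlane :=
  fun _ hz => (hasDerivAt_cpow_mul_exp_mul _ hz
    (differentiable_oneF1reg _ _ _).hasDerivAt).differentiableAt.differentiableWithinAt

lemma deriv_deriv_cpow_mul_exp_mul_of_kummer_equation {f : ℂ → ℂ} {β m z : ℂ} (hz : z ∈ slitPlane)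
    (hf : DifferentiableOn ℂ f slitPlane)
    (hkummer : z * deriv (deriv f) z + (1 + 2 * m - z) * deriv f z = (1 / 2 + m - β) * f z) :
    deriv (deriv fun z => z ^ (1 / 2 + m) * exp (-z / 2) * f z) z =
      (1 / 4 - β / z + (m ^ 2 - 1 / 4) / z ^ 2) * (z ^ (1 / 2 + m) * exp (-z / 2) * f z) := by
  have hz0 := slitPlane_ne_zero hz
  rw [(hasDerivAt_deriv_cpow_mul_exp_mul (1 / 2 + m) hz hf).deriv]
  generalize z ^ (1 / 2 + m) * exp (-z / 2) = E
  field_simp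
  linear_combination (16 * z * E) * hkummer

theorem deriv_deriv_whittI (β m : ℂ) {z : ℂ} (hz : z ∈ slitPlane) :
    deriv (deriv (whittI β m)) z =
      (1 / 4 - β / z + (m ^ 2 - 1 / 4) / z ^ 2) * whittI β m z :=
  deriv_deriv_cpow_mul_exp_mul_of_kummer_equation hz
    (differentiable_oneF1reg _ _).differentiableOn
    (oneF1reg_kummer_equation _ _ _)

lemma hasDerivAt_comp_mul_ofReal {f : ℂ → ℂ} {κ f' : ℂ} {r : ℝ} (hf : HasDerivAt f f' (κ * r)) :
    HasDerivAt (fun r : ℝ => f (κ * r)) (κ * f') r := by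
  have hlin : HasDerivAt (fun z : ℂ => κ * z) κ (r : ℂ) := by
    simpa using (hasDerivAt_id (r : ℂ)).const_mul κ
  exact ((hf.comp (r : ℂ) hlin).comp_ofReal).congr_deriv (mul_comm _ _)

lemma deriv_deriv_comp_mul_ofReal {f : ℂ → ℂ} {U : Set ℂ} (hU : IsOpen U)
    (hf : DifferentiableOn ℂ f U) {κ : ℂ} {r : ℝ} (hr : κ * r ∈ U) :
    deriv (deriv fun r : ℝ => f (κ * r)) r = κ ^ 2 * deriv (deriv f) (κ * r) := by
  have hfirst : deriv (fun r : ℝ => f (κ * r)) =ᶠ[𝓝 r] fun r => κ * deriv f (κ * r) := by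
    have hcont : Continuous fun r : ℝ => κ * (r : ℂ) := by fun_prop
    filter_upwards [hcont.continuousAt.preimage_mem_nhds (hU.mem_nhds hr)] with x hx
    exact (hasDerivAt_comp_mul_ofReal (hf.differentiableAt (hU.mem_nhds hx)).hasDerivAt).deriv
  have hsecond := hasDerivAt_comp_mul_ofReal
    ((hf.deriv hU).differentiableAt (hU.mem_nhds hr)).hasDerivAt
  rw [hfirst.deriv_eq, (hsecond.const_mul κ).deriv]
  ring

theorem whittI_radial_equation (β m : ℂ) {κ : ℂ} {r : ℝ} (hr : κ * r ∈ slitPlane) :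
    -deriv (deriv fun r : ℝ => whittI β m (κ * r)) r
        + (m ^ 2 - 1 / 4) / (r : ℂ) ^ 2 * whittI β m (κ * r)
        - κ * β / r * whittI β m (κ * r) = -(κ / 2) ^ 2 * whittI β m (κ * r) := by
  obtain ⟨hκ, hr0⟩ := mul_ne_zero_iff.1 (slitPlane_ne_zero hr)
  rw [deriv_deriv_comp_mul_ofReal isOpen_slitPlane (differentiableOn_whittI β m) hr,
    deriv_deriv_whittI β m hr]
  field_simp
  ring

lemma memLp_two_cpow_mul_exp_neg {s b : ℂ} (hs : -1 / 2 < s.re) (hb : 0 < b.re) :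
    MemLp (fun r : ℝ => (r : ℂ) ^ s * exp (-b * r)) 2 (volume.restrict (Ioi 0)) := by
  rw [memLp_two_iff_integrable_sq_norm (by fun_prop)]
  have hint : IntegrableOn (fun r : ℝ => r ^ (s.re * 2) * Real.exp (-(b.re * 2) * r ^ (1 : ℝ)))
      (Ioi 0) :=
    integrableOn_rpow_mul_exp_neg_mul_rpow (by linarith) one_pos (by linarith)
  refine hint.congr_fun (fun r hr => ?_) measurableSet_Ioi
  have hre : (-b * r).re = -b.re * r := by simp
  simp only [norm_mul, norm_cpow_eq_rpow_re_of_pos hr, norm_exp, hre, mul_pow, Real.rpow_one]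
  rw [← Real.rpow_mul_natCast (le_of_lt hr), ← Real.exp_nat_mul]
  congr 2
  push_cast
  ring

lemma mul_ofReal_cpow {κ : ℂ} (hκ : κ ≠ 0) {r : ℝ} (hr : 0 < r) (s : ℂ) :
    (κ * r) ^ s = κ ^ s * (r : ℂ) ^ s := by
  have hr0 : (r : ℂ) ≠ 0 := ofReal_ne_zero.2 hr.ne'
  rw [cpow_def_of_ne_zero (mul_ne_zero hκ hr0), cpow_def_of_ne_zero hκ, cpow_def_of_ne_zero hr0,
    ← exp_add, log_mul_ofReal r hr κ hκ, ofReal_log hr.le]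
  congr 1
  ring

lemma whittI_natCast_add_eq_sum (n : ℕ) (m : ℂ) {κ : ℂ} (hκ : κ ≠ 0) {r : ℝ} (hr : 0 < r) :
    whittI (n + m + 1 / 2) m (κ * r) = ∑ j ∈ Finset.range (n + 1),
      κ ^ (1 / 2 + m) * (oneF1regCoeff (-(n : ℂ)) (1 + 2 * m) j * κ ^ j) *
        ((r : ℂ) ^ (1 / 2 + m + j) * exp (-(κ / 2) * r)) := by
  have ha : 1 / 2 + m - (n + m + 1 / 2) = -(n : ℂ) := by ring
  have hexp : -(κ * r) / 2 = -(κ / 2) * r := by ring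
  rw [whittI, ha, oneF1reg_neg_natCast, mul_ofReal_cpow hκ hr, hexp, Finset.mul_sum]
  refine Finset.sum_congr rfl fun j _ => ?_
  rw [cpow_add (1 / 2 + m) _ (ofReal_ne_zero.2 hr.ne'), cpow_natCast, mul_pow]
  ring

theorem memLp_two_whittI_natCast_add (n : ℕ) {m κ : ℂ} (hm : -1 < m.re) (hκ : 0 < κ.re) :
    MemLp (fun r : ℝ => whittI (n + m + 1 / 2) m (κ * r)) 2 (volume.restrict (Ioi 0)) := by
  have hκ0 : κ ≠ 0 := slitPlane_ne_zero (Or.inl hκ)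
  have hsum : MemLp (fun r : ℝ => ∑ j ∈ Finset.range (n + 1),
      κ ^ (1 / 2 + m) * (oneF1regCoeff (-(n : ℂ)) (1 + 2 * m) j * κ ^ j) *
        ((r : ℂ) ^ (1 / 2 + m + j) * exp (-(κ / 2) * r))) 2 (volume.restrict (Ioi 0)) := by
    refine memLp_finsetSum _ fun j _ => (memLp_two_cpow_mul_exp_neg ?_ ?_).const_mul _
    · simp only [add_re, natCast_re, one_div, inv_re, re_ofNat, normSq_ofNat]
      linarith [j.cast_nonneg (α := ℝ)]
    · simpa using hκ
  refine hsum.ae_eq ?_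
  filter_upwards [ae_restrict_mem measurableSet_Ioi] with r hr
  exact (whittI_natCast_add_eq_sum n m hκ0 hr).symm

/-- bound states of the Whittaker (radial Coulomb) operator: for `n ∈ ℕ₀`,
`Re m > -1`, `m ≠ -(n+1/2)`, `Re k > 0` and `β = 2k(n+m+1/2)`, the function
`u(r) = 𝓘_{n+m+1/2, m}(2kr)` solves `-u'' + (m²-1/4)r⁻²u - (β/r)u = -k²u` on `]0,∞[`
and is square integrable there; hence `-k²` is in the point spectrum of `H_{β,m}`. -/
theorem whittaker_bound_state (n : ℕ) (m : ℂ) (hm : -1 < m.re)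
    (hm' : m ≠ -((n : ℂ) + 1 / 2)) (k : ℂ) (hk : 0 < k.re)
    (β : ℂ) (hβ : β = 2 * k * ((n : ℂ) + m + 1 / 2))
    (u : ℝ → ℂ) (hu : ∀ r : ℝ, u r = whittI ((n : ℂ) + m + 1 / 2) m (2 * k * r)) :
    (∀ r : ℝ, 0 < r →
      -deriv (deriv u) r + (m ^ 2 - 1 / 4) / (r : ℂ) ^ 2 * u r -
          β / (r : ℂ) * u r = -k ^ 2 * u r) ∧
    IntegrableOn (fun r : ℝ => ‖u r‖ ^ 2) (Ioi (0 : ℝ)) := by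
  obtain rfl : u = fun r : ℝ => whittI (n + m + 1 / 2) m (2 * k * r) := funext hu
  have hκ : 0 < (2 * k).re := by simpa using hk
  have hL2 := memLp_two_whittI_natCast_add n hm hκ
  refine ⟨fun r hr => ?_, (memLp_two_iff_integrable_sq_norm hL2.1).1 hL2⟩
  have hslit : 2 * k * r ∈ slitPlane := Or.inl (by rw [re_mul_ofReal]; positivity)
  have heq := whittI_radial_equation (n + m + 1 / 2) m hslit
  rwa [← hβ, mul_div_cancel_left₀ k two_ne_zero] at heq
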